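/- For Lebesgue-almost every irrational x ∈ (0,1), log L_n(x, 𝒞ℱ, ℱ)/n → π²/(12 log 2) as n → ∞, where L_n(x, 𝒞ℱ, ℱ) is the Lochs index from the continued fraction to the Farey sequence of partitions (equivalently, log(2 q_n(x) + q_{n−1}(x) − 2)/n → π²/(12 log 2) a.e.). -/

import Mathlib

open MeasureTheory Filter Set

noncomputable section

/-- The set `E_n^ℱ` of endpoints of the Farey partition `F_n`: rationals of `[0,1]` whose
denominator in lowest terms is at most `n+1`. -/
def fareyPts (n : ℕ) : Set ℝ :=
  {x | ∃ p q : ℕ, q ≠ 0 ∧ q ≤ n + 1 ∧ p ≤ q ∧ Nat.gcd p q = 1 ∧ x = (p : ℝ) / q}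

/-- The interval `I_n^ℱ(x)` of the Farey partition `F_n` containing `x`: the open interval
between the largest Farey point of order `n+1` below `x` and the smallest one above `x`. -/
def fareyInterval (n : ℕ) (x : ℝ) : Set ℝ :=
  Set.Ioo (sSup (fareyPts n ∩ Set.Iio x)) (sInf (fareyPts n ∩ Set.Ioi x))

/-- The partial quotient `a_{m+1}` of the continued fraction expansion of `x ∈ (0,1)`,
obtained from the Gauss map: `cfa x m = ⌊1 / T_G^m x⌋` where `T_G y = {1/y}`. -/
def cfa (x : ℝ) (m : ℕ) : ℕ := ⌊1 / ((fun y => Int.fract (1 / y))^[m] x)⌋₊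

/-- Numerators of the convergents of `x`, shifted by one: `cfp x (m+1) = p_m`, with
`p_{-1} = 1`, `p_0 = 0`, `p_{m+1} = a_{m+1} p_m + p_{m-1}`. -/
def cfp (x : ℝ) : ℕ → ℕ
  | 0 => 1
  | 1 => 0
  | m + 2 => cfa x m * cfp x (m + 1) + cfp x m

/-- Denominators of the convergents of `x`, shifted by one: `cfq x (m+1) = q_m`, with
`q_{-1} = 0`, `q_0 = 1`, `q_{m+1} = a_{m+1} q_m + q_{m-1}`. -/
def cfq (x : ℝ) : ℕ → ℕ
  | 0 => 0
  | 1 => 1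
  | m + 2 => cfa x m * cfq x (m + 1) + cfq x m

/-- The fundamental interval `I_n^{𝒞ℱ}(x)` of depth `n` of the continued fraction
expansion: the open interval with endpoints `p_n/q_n` and `(p_n+p_{n-1})/(q_n+q_{n-1})`,
the former being the left endpoint iff `n` is even. -/
def cfInterval (x : ℝ) (n : ℕ) : Set ℝ :=
  if Even n then
    Set.Ioo ((cfp x (n + 1) : ℝ) / (cfq x (n + 1) : ℝ))
      (((cfp x (n + 1) + cfp x n : ℕ) : ℝ) / ((cfq x (n + 1) + cfq x n : ℕ) : ℝ))
  else
    Set.Ioo (((cfp x (n + 1) + cfp x n : ℕ) : ℝ) / ((cfq x (n + 1) + cfq x n : ℕ) : ℝ))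
      ((cfp x (n + 1) : ℝ) / (cfq x (n + 1) : ℝ))

/-- The Lochs index `L_n(x, 𝒞ℱ, ℱ)` from the continued fraction sequence of partitions to
the Farey sequence of partitions. -/
def lochsCFtoF (x : ℝ) (n : ℕ) : ℕ :=
  sSup {ℓ : ℕ | cfInterval x n ⊆ fareyInterval ℓ x}

/-- The Lochs index `L_n(x, ℱ, 𝒞ℱ)` from the Farey sequence of partitions to the
continued fraction sequence of partitions. -/
def lochsFtoCF (x : ℝ) (n : ℕ) : ℕ :=
  sSup {ℓ : ℕ | fareyInterval n x ⊆ cfInterval x ℓ}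

lemma lochs_abs (a b c d : ℕ) (hb : 0 < b) (hd : 0 < d) (hdet : c * b = a * d + 1) (hcd : c ≤ d)
    (x : ℝ) (hx : Irrational x) (hxI : x ∈ Set.Ioo ((a : ℝ) / b) ((c : ℝ) / d)) :
    sSup {ℓ : ℕ | Set.Ioo ((a : ℝ) / b) ((c : ℝ) / d) ⊆ fareyInterval ℓ x} = b + d - 2 := by
  have hbR : (0 : ℝ) < b := by exact_mod_cast hb
  have hdR : (0 : ℝ) < d := by exact_mod_cast hd
  have hdetR : (c : ℝ) * b = a * d + 1 := by exact_mod_cast hdet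
  have hx0 : 0 < x := lt_of_le_of_lt (by positivity) hxI.1
  have hx1 : x < 1 := lt_of_lt_of_le hxI.2 (by rw [div_le_one hdR]; exact_mod_cast hcd)
  have key : {ℓ : ℕ | Set.Ioo ((a : ℝ) / b) ((c : ℝ) / d) ⊆ fareyInterval ℓ x}
      = Set.Iic (b + d - 2) := by
    ext ℓ
    simp only [Set.mem_ofPred_eq, Set.mem_Iic]
    constructor
    · intro h
      by_contra hlt
      have hl : b + d ≤ ℓ + 1 := by omega
      set M : ℝ := ((a + c : ℕ) : ℝ) / ((b + d : ℕ) : ℝ) with hM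
      have hMF : M ∈ fareyPts ℓ := by
        refine ⟨a + c, b + d, by omega, hl, ?_, ?_, rfl⟩
        · have : a ≤ b := by
            by_contra hab
            have h1 : b * d ≤ a * d := Nat.mul_le_mul_right _ (by omega)
            have h2 : c * b ≤ d * b := Nat.mul_le_mul_right _ hcd
            nlinarith
          omega
        · apply Nat.Coprime.gcd_eq_one
          rw [← Nat.isCoprime_iff_coprime]
          refine ⟨b, -a, ?_⟩
          have : (c : ℤ) * b = a * d + 1 := by exact_mod_cast hdet
          push_cast
          linarith
      have hMI : M ∈ Set.Ioo ((a : ℝ) / b) ((c : ℝ) / d) := by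
        rw [hM]; push_cast
        constructor
        · rw [div_lt_div_iff₀ hbR (by positivity)]; nlinarith
        · rw [div_lt_div_iff₀ (by positivity) hdR]; nlinarith
      have hMx : M ≠ x := by
        intro he
        apply hx
        exact ⟨((a + c : ℕ) : ℚ) / ((b + d : ℕ) : ℚ), by rw [← he, hM]; push_cast; rfl⟩
      have hMf := h hMI
      rcases lt_or_gt_of_ne hMx with hlt' | hgt
      · have : M ≤ sSup (fareyPts ℓ ∩ Set.Iio x) :=
          le_csSup ⟨x, fun y hy => le_of_lt hy.2⟩ ⟨hMF, hlt'⟩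
        exact absurd hMf.1 (not_lt.mpr this)
      · have : sInf (fareyPts ℓ ∩ Set.Ioi x) ≤ M :=
          csInf_le ⟨x, fun y hy => le_of_lt hy.2⟩ ⟨hMF, hgt⟩
        exact absurd hMf.2 (not_lt.mpr this)
    · intro hl
      have hno : ∀ y ∈ fareyPts ℓ, y ∉ Set.Ioo ((a : ℝ) / b) ((c : ℝ) / d) := by
        rintro y ⟨P, Q, hQ0, hQ, -, -, rfl⟩ ⟨h1, h2⟩
        have hQR : (0 : ℝ) < Q := by exact_mod_cast Nat.pos_of_ne_zero hQ0
        rw [div_lt_div_iff₀ hbR hQR] at h1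
        rw [div_lt_div_iff₀ hQR hdR] at h2
        have h1' : a * Q + 1 ≤ P * b := by exact_mod_cast h1
        have h2' : P * d + 1 ≤ c * Q := by exact_mod_cast h2
        have : b + d ≤ Q := by
          zify at *
          nlinarith
        omega
      apply Set.Ioo_subset_Ioo
      · apply csSup_le
        · exact ⟨0, ⟨0, 1, by simp⟩, hx0⟩
        · rintro y ⟨hy, hyx⟩
          by_contra hlt
          exact hno y hy ⟨not_le.mp hlt, lt_trans hyx hxI.2⟩
      · apply le_csInf
        · exact ⟨1, ⟨1, 1, by simp⟩, hx1⟩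
        · rintro y ⟨hy, hyx⟩
          by_contra hlt
          exact hno y hy ⟨lt_trans hxI.1 hyx, not_le.mp hlt⟩
  rw [key, csSup_Iic]

def GT (y : ℝ) : ℝ := Int.fract (1 / y)

lemma cfa_eq (x : ℝ) (m : ℕ) : cfa x m = ⌊1 / (GT^[m] x)⌋₊ := rfl

lemma GT_irr {x : ℝ} (hx : Irrational x) : Irrational (GT x) := by
  unfold GT
  rw [one_div]
  have := (irrational_inv_iff.mpr hx).sub_intCast ⌊x⁻¹⌋
  exact this

lemma GT_iter_irr {x : ℝ} (hx : Irrational x) (n : ℕ) : Irrational (GT^[n] x) := by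
  induction n with
  | zero => exact hx
  | succ n ih => rw [Function.iterate_succ_apply']; exact GT_irr ih

lemma GT_iter_mem {x : ℝ} (hx : Irrational x) (h : x ∈ Set.Ioo (0 : ℝ) 1) (n : ℕ) :
    GT^[n] x ∈ Set.Ioo (0 : ℝ) 1 := by
  cases n with
  | zero => exact h
  | succ n =>
    have hi := GT_iter_irr hx (n + 1)
    rw [Function.iterate_succ_apply'] at hi ⊢
    refine ⟨lt_of_le_of_ne (Int.fract_nonneg _) ?_, Int.fract_lt_one _⟩
    exact fun h => hi.ne_zero h.symm

lemma GT_succ {x : ℝ} (hx : Irrational x) (h : x ∈ Set.Ioo (0 : ℝ) 1) (n : ℕ) :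
    GT^[n] x * (GT^[n + 1] x + cfa x n) = 1 := by
  have hm := GT_iter_mem hx h n
  rw [Function.iterate_succ_apply', cfa_eq]
  have h0 : (0 : ℝ) ≤ 1 / (GT^[n] x) := by have := hm.1; positivity
  rw [natCast_floor_eq_intCast_floor h0, GT, Int.fract_add_floor]
  have := hm.1.ne'
  field_simp

lemma cfa_pos {x : ℝ} (hx : Irrational x) (h : x ∈ Set.Ioo (0 : ℝ) 1) (n : ℕ) :
    1 ≤ cfa x n := by
  have hm := GT_iter_mem hx h n
  rw [cfa_eq]
  apply Nat.le_floor
  rw [Nat.cast_one, le_div_iff₀ hm.1]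
  linarith [hm.2]

lemma cfq_prod {x : ℝ} (hx : Irrational x) (h : x ∈ Set.Ioo (0 : ℝ) 1) (n : ℕ) :
    (cfq x (n + 1) + GT^[n] x * cfq x n) * ∏ i ∈ Finset.range n, GT^[i] x = 1 := by
  induction n with
  | zero => simp [cfq]
  | succ n ih =>
    rw [Finset.prod_range_succ]
    have hs := GT_succ hx h n
    rw [← ih]
    have : (cfq x (n + 1 + 1) : ℝ) = cfa x n * cfq x (n + 1) + cfq x n := by
      simp [cfq]
    rw [this]
    linear_combination (∏ i ∈ Finset.range n, GT^[i] x) * (cfq x (n + 1) : ℝ) * hs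

lemma cfp_rel {x : ℝ} (hx : Irrational x) (h : x ∈ Set.Ioo (0 : ℝ) 1) (n : ℕ) :
    (cfp x (n + 1) + GT^[n] x * cfp x n) = x * (cfq x (n + 1) + GT^[n] x * cfq x n) := by
  induction n with
  | zero => simp [cfq, cfp]
  | succ n ih =>
    have hs := GT_succ hx h n
    have hne : GT^[n] x ≠ 0 := (GT_iter_mem hx h n).1.ne'
    have h1 : (cfq x (n + 1 + 1) : ℝ) = cfa x n * cfq x (n + 1) + cfq x n := by
      simp [cfq]
    have h2 : (cfp x (n + 1 + 1) : ℝ) = cfa x n * cfp x (n + 1) + cfp x n := by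
      simp [cfp]
    rw [h1, h2]
    apply mul_left_cancel₀ hne
    linear_combination ih + (cfp x (n + 1) - x * cfq x (n + 1) : ℝ) * hs

lemma cf_det (x : ℝ) (n : ℕ) :
    (cfp x n : ℤ) * cfq x (n + 1) - cfp x (n + 1) * cfq x n = (-1) ^ n := by
  induction n with
  | zero => simp [cfq, cfp]
  | succ n ih =>
    have h1 : (cfq x (n + 1 + 1) : ℤ) = cfa x n * cfq x (n + 1) + cfq x n := by
      simp [cfq]
    have h2 : (cfp x (n + 1 + 1) : ℤ) = cfa x n * cfp x (n + 1) + cfp x n := by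
      simp [cfp]
    rw [h1, h2, pow_succ, ← ih]
    ring

lemma cf_bounds {x : ℝ} (hx : Irrational x) (h : x ∈ Set.Ioo (0 : ℝ) 1) (n : ℕ) :
    cfp x (n + 1) ≤ cfq x (n + 1) ∧ cfp x (n + 1) + cfp x n ≤ cfq x (n + 1) + cfq x n ∧
    1 ≤ cfq x (n + 1) ∧ cfq x n ≤ cfq x (n + 1) := by
  induction n with
  | zero => simp [cfq, cfp]
  | succ n ih =>
    obtain ⟨i1, i2, i3, i4⟩ := ih
    obtain ⟨k, hk⟩ := Nat.exists_eq_add_of_le (cfa_pos hx h n)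
    have h1 : cfq x (n + 1 + 1) = cfa x n * cfq x (n + 1) + cfq x n := by
      simp [cfq]
    have h2 : cfp x (n + 1 + 1) = cfa x n * cfp x (n + 1) + cfp x n := by
      simp [cfp]
    rw [h1, h2, hk]
    have := Nat.mul_le_mul_left k i1
    refine ⟨?_, ?_, ?_, ?_⟩ <;> nlinarith

lemma cfq_ge_two {x : ℝ} (hx : Irrational x) (h : x ∈ Set.Ioo (0 : ℝ) 1) (n : ℕ) :
    2 ≤ cfq x (n + 3) := by
  have h1 : cfq x (n + 3) = cfa x (n + 1) * cfq x (n + 2) + cfq x (n + 1) := by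
    simp [cfq]
  have := cfa_pos hx h (n + 1)
  have := (cf_bounds hx h (n + 1)).2.2.1
  have := (cf_bounds hx h n).2.2.1
  rw [h1]
  nlinarith

lemma lochs_eq {x : ℝ} (hx : Irrational x) (h : x ∈ Set.Ioo (0 : ℝ) 1) (n : ℕ) :
    lochsCFtoF x n = 2 * cfq x (n + 1) + cfq x n - 2 := by
  obtain ⟨b1, b2, b3, b4⟩ := cf_bounds hx h n
  have hdet := cf_det x n
  have hrel := cfp_rel hx h n
  have hX := GT_iter_mem hx h n
  set t := GT^[n] x
  have hq : (0 : ℝ) < cfq x (n + 1) := by exact_mod_cast b3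
  have hqq : (0 : ℝ) < cfq x (n + 1) + t * cfq x n := by have := hX.1; positivity
  have hxe : x = (cfp x (n + 1) + t * cfp x n) / (cfq x (n + 1) + t * cfq x n) := by
    rw [eq_div_iff hqq.ne']; exact hrel.symm
  have ht0 := hX.1
  have ht1 := hX.2
  unfold lochsCFtoF cfInterval
  by_cases he : Even n
  · simp only [he, if_true]
    rw [he.neg_one_pow] at hdet
    have hdR : (cfp x n : ℝ) * cfq x (n + 1) - cfp x (n + 1) * cfq x n = 1 := by
      exact_mod_cast hdet
    rw [lochs_abs _ _ _ _ b3 (by omega) (by zify; linarith) b2 x hx]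
    · congr 1; ring
    · push_cast
      constructor
      · refine lt_of_lt_of_eq ?_ hxe.symm
        rw [div_lt_div_iff₀ hq hqq]; nlinarith
      · refine lt_of_eq_of_lt hxe ?_
        rw [div_lt_div_iff₀ hqq (by positivity)]; nlinarith
  · simp only [he, if_false]
    rw [(Nat.not_even_iff_odd.mp he).neg_one_pow] at hdet
    have hdR : (cfp x n : ℝ) * cfq x (n + 1) - cfp x (n + 1) * cfq x n = -1 := by
      exact_mod_cast hdet
    rw [lochs_abs _ _ _ _ (by omega) b3 (by zify; linarith) b1 x hx]
    · congr 1; ring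
    · push_cast
      constructor
      · refine lt_of_lt_of_eq ?_ hxe.symm
        rw [div_lt_div_iff₀ (by positivity) hqq]; nlinarith
      · refine lt_of_eq_of_lt hxe ?_
        rw [div_lt_div_iff₀ hqq hq]; nlinarith

lemma lochs_log {x : ℝ} (hx : Irrational x) (h : x ∈ Set.Ioo (0 : ℝ) 1) (n : ℕ) (hn : 2 ≤ n) :
    |Real.log (lochsCFtoF x n) - ∑ i ∈ Finset.range n, -Real.log (GT^[i] x)| ≤ Real.log 3 := by
  obtain ⟨m, rfl⟩ := Nat.exists_eq_add_of_le' hn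
  obtain ⟨b1, b2, b3, b4⟩ := cf_bounds hx h (m + 2)
  have h2 := cfq_ge_two hx h m
  have hL := lochs_eq hx h (m + 2)
  have hP := cfq_prod hx h (m + 2)
  have hX := GT_iter_mem hx h (m + 2)
  set q := cfq x (m + 2 + 1)
  set q' := cfq x (m + 2)
  set L := lochsCFtoF x (m + 2)
  set t := GT^[m + 2] x
  have hq2 : 2 ≤ q := h2
  have hL1 : q ≤ L := by omega
  have hL2 : L ≤ 3 * q := by omega
  have hqR : (0 : ℝ) < q := by exact_mod_cast b3
  have hL1R : (q : ℝ) ≤ L := by exact_mod_cast hL1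
  have hL2R : (L : ℝ) ≤ 3 * q := by exact_mod_cast hL2
  have b4R : (q' : ℝ) ≤ q := by exact_mod_cast b4
  have hq'0 : (0 : ℝ) ≤ q' := by positivity
  have hne : ∀ i ∈ Finset.range (m + 2), GT^[i] x ≠ 0 := fun i _ => (GT_iter_mem hx h i).1.ne'
  have hS : ∑ i ∈ Finset.range (m + 2), -Real.log (GT^[i] x) = Real.log (q + t * q') := by
    rw [Finset.sum_neg_distrib, ← Real.log_prod hne, ← Real.log_inv]
    congr 1
    exact (eq_inv_of_mul_eq_one_left hP).symm
  have hLe : (L : ℝ) ≤ 3 * (q + t * q') := by have := hX.1; nlinarith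
  have hGe : (q + t * q') ≤ 3 * (L : ℝ) := by have := hX.2; nlinarith
  have hpos : (0 : ℝ) < q + t * q' := by have := hX.1; positivity
  have hLpos : (0 : ℝ) < L := lt_of_lt_of_le hqR hL1R
  have e1 := Real.log_le_log hLpos hLe
  have e2 := Real.log_le_log hpos hGe
  rw [Real.log_mul (by norm_num) hpos.ne'] at e1
  rw [Real.log_mul (by norm_num) hLpos.ne'] at e2
  rw [hS, abs_le]
  constructor <;> linarith
def PK (k : ℕ) (x : ℝ) : ℝ := (1 + x) / ((k + 1 + x) * (k + 2 + x))

def psi (k : ℕ) (x : ℝ) : ℝ := 1 / (k + 1 + x)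

lemma PK_nonneg (k : ℕ) {x : ℝ} (hx : 0 ≤ x) : 0 ≤ PK k x := by
  unfold PK; positivity

lemma PK_sum (N : ℕ) {x : ℝ} (hx : 0 ≤ x) :
    ∑ k ∈ Finset.range N, PK k x = N / (x + N + 1) := by
  induction N with
  | zero => simp
  | succ N ih =>
    rw [Finset.sum_range_succ, ih, PK]
    push_cast
    field_simp
    ring

lemma PK_sum_le (N : ℕ) {x : ℝ} (hx : 0 ≤ x) :
    ∑ k ∈ Finset.range N, PK k x ≤ 1 := by
  rw [PK_sum N hx, div_le_one (by positivity)]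
  linarith

lemma PK_hasSum {x : ℝ} (hx : 0 ≤ x) : HasSum (fun k => PK k x) 1 := by
  rw [hasSum_iff_tendsto_nat_of_nonneg (fun k => PK_nonneg k hx)]
  simp_rw [PK_sum _ hx]
  have : Tendsto (fun n : ℕ => 1 - (x + 1) / ((n : ℝ) + (x + 1))) atTop (nhds (1 - 0)) := by
    apply Tendsto.sub tendsto_const_nhds
    apply Tendsto.div_atTop tendsto_const_nhds
    exact tendsto_atTop_add_const_right _ _ tendsto_natCast_atTop_atTop
  rw [sub_zero] at this
  refine this.congr (fun n => ?_)
  have : (n : ℝ) + (x + 1) ≠ 0 := by positivity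
  field_simp
  ring

lemma psi_mem (k : ℕ) {x : ℝ} (hx : x ∈ Set.Ioo (0 : ℝ) 1) : psi k x ∈ Set.Ioo (0 : ℝ) 1 := by
  have := hx.1
  unfold psi
  refine ⟨by positivity, ?_⟩
  rw [div_lt_one (by positivity)]
  have : (0 : ℝ) ≤ k := by positivity
  linarith

lemma abel_aux (A B v : ℕ → ℝ) (h0 : A 0 = B 0) (N : ℕ) :
    ∑ k ∈ Finset.range N, ((A (k + 1) - A k) - (B (k + 1) - B k)) * v k
      = (A N - B N) * v N - ∑ k ∈ Finset.range N, (A (k + 1) - B (k + 1)) * (v (k + 1) - v k) := by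
  induction N with
  | zero => simp [h0]
  | succ N ih => rw [Finset.sum_range_succ, Finset.sum_range_succ, ih]; ring

lemma A_diff (N : ℕ) {x y : ℝ} (hx : 0 ≤ x) (hy : 0 ≤ y) :
    |(N : ℝ) / (x + N + 1) - N / (y + N + 1)| ≤ N / (N + 1) ^ 2 * |x - y| := by
  have h : (N : ℝ) / (x + N + 1) - N / (y + N + 1)
      = N / ((x + N + 1) * (y + N + 1)) * (y - x) := by
    field_simp
    ring
  rw [h, abs_mul, abs_sub_comm y x, abs_of_nonneg (by positivity)]
  apply mul_le_mul_of_nonneg_right _ (abs_nonneg _)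
  apply div_le_div_of_nonneg_left (by positivity) (by positivity)
  nlinarith [mul_nonneg hx hy, (Nat.cast_nonneg N : (0 : ℝ) ≤ N), mul_nonneg hx (Nat.cast_nonneg N : (0 : ℝ) ≤ N),
    mul_nonneg hy (Nat.cast_nonneg N : (0 : ℝ) ≤ N)]

lemma core (x y : ℝ) (hx : 0 ≤ x) (hy : 0 ≤ y) (u v a b : ℕ → ℝ)
    (hu : ∀ k, |u k - v k| ≤ a k * |x - y|) (hv : ∀ k, |v (k + 1) - v k| ≤ b k) (C : ℝ)
    (hC : ∀ N, ∑ k ∈ Finset.range N, PK k x * a k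
      + ∑ k ∈ Finset.range N, ((k : ℝ) + 1) / (k + 2) ^ 2 * b k ≤ C)
    (hlim : Tendsto (fun N : ℕ => |v N| / (N + 1)) atTop (nhds 0))
    (s t : ℝ) (hs : HasSum (fun k => PK k x * u k) s) (ht : HasSum (fun k => PK k y * v k) t) :
    |s - t| ≤ C * |x - y| := by
  have hst := (hs.sub ht).tendsto_sum_nat.abs
  have hR : Tendsto (fun N : ℕ => C * |x - y| + |v N| / (N + 1) * |x - y|) atTop
      (nhds (C * |x - y| + 0 * |x - y|)) := (hlim.mul_const _).const_add _
  rw [zero_mul, add_zero] at hR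
  refine le_of_tendsto_of_tendsto' hst hR (fun N => ?_)
  have h1 : ∑ k ∈ Finset.range N, (PK k x * u k - PK k y * v k)
      = ∑ k ∈ Finset.range N, PK k x * (u k - v k)
        + ∑ k ∈ Finset.range N, (PK k x - PK k y) * v k := by
    rw [← Finset.sum_add_distrib]
    exact Finset.sum_congr rfl (fun k _ => by ring)
  have hP : ∀ (k : ℕ) {z : ℝ}, 0 ≤ z →
      PK k z = ((k + 1 : ℕ) : ℝ) / (z + (k + 1 : ℕ) + 1) - (k : ℝ) / (z + k + 1) := by
    intro k z hz
    rw [← PK_sum _ hz, ← PK_sum _ hz, Finset.sum_range_succ]; ring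
  have h2 : ∑ k ∈ Finset.range N, (PK k x - PK k y) * v k
      = ((N : ℝ) / (x + N + 1) - N / (y + N + 1)) * v N
        - ∑ k ∈ Finset.range N, (((k + 1 : ℕ) : ℝ) / (x + (k + 1 : ℕ) + 1)
          - ((k + 1 : ℕ) : ℝ) / (y + (k + 1 : ℕ) + 1)) * (v (k + 1) - v k) := by
    rw [← abel_aux (fun k => (k : ℝ) / (x + k + 1)) (fun k => (k : ℝ) / (y + k + 1)) v (by simp)]
    exact Finset.sum_congr rfl (fun k _ => by rw [hP k hx, hP k hy])
  have e1 : |∑ k ∈ Finset.range N, PK k x * (u k - v k)|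
      ≤ (∑ k ∈ Finset.range N, PK k x * a k) * |x - y| := by
    rw [Finset.sum_mul]
    refine (Finset.abs_sum_le_sum_abs _ _).trans (Finset.sum_le_sum fun k _ => ?_)
    rw [abs_mul, abs_of_nonneg (PK_nonneg k hx), mul_assoc]
    exact mul_le_mul_of_nonneg_left (hu k) (PK_nonneg k hx)
  have e2 : |∑ k ∈ Finset.range N, (((k + 1 : ℕ) : ℝ) / (x + (k + 1 : ℕ) + 1)
          - ((k + 1 : ℕ) : ℝ) / (y + (k + 1 : ℕ) + 1)) * (v (k + 1) - v k)|
      ≤ (∑ k ∈ Finset.range N, ((k : ℝ) + 1) / (k + 2) ^ 2 * b k) * |x - y| := by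
    rw [Finset.sum_mul]
    refine (Finset.abs_sum_le_sum_abs _ _).trans (Finset.sum_le_sum fun k _ => ?_)
    rw [abs_mul]
    have := mul_le_mul (A_diff (k + 1) hx hy) (hv k) (abs_nonneg _) (by positivity)
    refine this.trans (le_of_eq ?_)
    push_cast
    ring
  have e3 : |((N : ℝ) / (x + N + 1) - N / (y + N + 1)) * v N| ≤ |v N| / (N + 1) * |x - y| := by
    rw [abs_mul]
    have h3 := mul_le_mul_of_nonneg_right (A_diff N hx hy) (abs_nonneg (v N))
    refine h3.trans ?_
    have : (N : ℝ) / (N + 1) ^ 2 ≤ 1 / (N + 1) := by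
      rw [div_le_div_iff₀ (by positivity) (by positivity)]; nlinarith [(Nat.cast_nonneg N : (0:ℝ) ≤ N)]
    have h4 := mul_le_mul_of_nonneg_right this (mul_nonneg (abs_nonneg (x - y)) (abs_nonneg (v N)))
    calc _ = (N : ℝ) / (N + 1) ^ 2 * (|x - y| * |v N|) := by ring
      _ ≤ _ := h4
      _ = _ := by ring
  rw [h1, h2]
  have h5 := mul_le_mul_of_nonneg_right (hC N) (abs_nonneg (x - y))
  rw [add_mul] at h5
  have h6 := abs_add_le (∑ k ∈ Finset.range N, PK k x * (u k - v k)) (((N : ℝ) / (x + N + 1) - N / (y + N + 1)) * v N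
        - ∑ k ∈ Finset.range N, (((k + 1 : ℕ) : ℝ) / (x + (k + 1 : ℕ) + 1)
          - ((k + 1 : ℕ) : ℝ) / (y + (k + 1 : ℕ) + 1)) * (v (k + 1) - v k))
  have h7 := abs_sub (((N : ℝ) / (x + N + 1) - N / (y + N + 1)) * v N) (∑ k ∈ Finset.range N, (((k + 1 : ℕ) : ℝ) / (x + (k + 1 : ℕ) + 1)
          - ((k + 1 : ℕ) : ℝ) / (y + (k + 1 : ℕ) + 1)) * (v (k + 1) - v k))
  linarith

lemma bd1 (N : ℕ) {x : ℝ} (hx : 0 ≤ x) :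
    ∑ k ∈ Finset.range N, PK k x * (1 / ((k : ℝ) + 1) ^ 2) ≤ 5 / 8 := by
  have h : ∀ N : ℕ, ∑ k ∈ Finset.range N, PK k x * (1 / ((k : ℝ) + 1) ^ 2)
      ≤ 1 / 4 * ∑ k ∈ Finset.range N, PK k x + 3 / 4 * PK 0 x := by
    intro N
    induction N with
    | zero => simpa using PK_nonneg 0 hx
    | succ N ih =>
      rcases Nat.eq_zero_or_pos N with rfl | hN
      · simp; linarith
      · rw [Finset.sum_range_succ, Finset.sum_range_succ]
        have hN' : (1 : ℝ) ≤ N := by exact_mod_cast hN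
        have : 1 / ((N : ℝ) + 1) ^ 2 ≤ 1 / 4 := by
          apply div_le_div_of_nonneg_left <;> nlinarith
        have := mul_le_mul_of_nonneg_left this (PK_nonneg N hx)
        linarith
  have h0 : PK 0 x ≤ 1 / 2 := by
    unfold PK
    rw [div_le_div_iff₀ (by positivity) (by positivity)]
    push_cast
    nlinarith
  have := h N
  have := PK_sum_le N hx
  linarith

lemma bd2 (N : ℕ) : ∑ k ∈ Finset.range N, 1 / ((k : ℝ) + 2) ^ 3 ≤ 1 / 4 := by
  have h : ∀ N : ℕ, ∑ k ∈ Finset.range N, 1 / ((k : ℝ) + 2) ^ 3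
      ≤ 1 / 4 - 1 / (2 * ((N : ℝ) + 1) * ((N : ℝ) + 2)) := by
    intro N
    induction N with
    | zero => simp; norm_num
    | succ N ih =>
      rw [Finset.sum_range_succ]
      have : 1 / ((N : ℝ) + 2) ^ 3 ≤ 1 / (2 * ((N : ℝ) + 1) * (N + 2)) - 1 / (2 * ((N : ℝ) + 1 + 1) * (N + 1 + 2)) := by
        have e : 1 / (2 * ((N : ℝ) + 1) * (N + 2)) - 1 / (2 * ((N : ℝ) + 1 + 1) * (N + 1 + 2))
          = 1 / ((N + 1) * (N + 2) * (N + 3)) := by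
          field_simp
          ring
        rw [e]
        apply div_le_div_of_nonneg_left (by norm_num) (by positivity)
        have : (0 : ℝ) ≤ N := by positivity
        nlinarith
      push_cast
      linarith
  have := h N
  have : 0 ≤ 1 / (2 * ((N : ℝ) + 1) * (N + 2)) := by positivity
  linarith

lemma bd3 (N : ℕ) : ∑ k ∈ Finset.range N, 1 / ((k : ℝ) + 2) ^ 2 ≤ 1 := by
  have h : ∀ N : ℕ, ∑ k ∈ Finset.range N, 1 / ((k : ℝ) + 2) ^ 2
      ≤ 1 - 1 / ((N : ℝ) + 1) := by
    intro N
    induction N with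
    | zero => simp
    | succ N ih =>
      rw [Finset.sum_range_succ]
      have : 1 / ((N : ℝ) + 2) ^ 2 ≤ 1 / ((N : ℝ) + 1) - 1 / ((N : ℝ) + 1 + 1) := by
        have e : 1 / ((N : ℝ) + 1) - 1 / ((N : ℝ) + 1 + 1) = 1 / ((N + 1) * (N + 2)) := by
          field_simp
          ring
        rw [e]
        apply div_le_div_of_nonneg_left (by norm_num) (by positivity)
        have : (0 : ℝ) ≤ N := by positivity
        nlinarith
      push_cast
      linarith
  have := h N
  have : 0 ≤ 1 / ((N : ℝ) + 1) := by positivity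
  linarith

/-- Lipschitz on the unit interval. -/
def LipOn (r : ℝ → ℝ) (L : ℝ) : Prop :=
  ∀ x ∈ Set.Ioo (0 : ℝ) 1, ∀ y ∈ Set.Ioo (0 : ℝ) 1, |r x - r y| ≤ L * |x - y|

def UR (r : ℝ → ℝ) (x : ℝ) : ℝ := ∑' k, PK k x * r (psi k x)

lemma lip_bdd {r : ℝ → ℝ} {L : ℝ} (hL : 0 ≤ L) (hr : LipOn r L) :
    ∃ B, ∀ x ∈ Set.Ioo (0 : ℝ) 1, |r x| ≤ B := by
  refine ⟨|r (1 / 2)| + L, fun x hx => ?_⟩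
  have h := hr x hx (1 / 2) (by norm_num)
  have h1 : |x - 1 / 2| ≤ 1 := by rw [abs_le]; constructor <;> linarith [hx.1, hx.2]
  have h2 : L * |x - 1 / 2| ≤ L := by nlinarith
  have h3 := abs_sub_abs_le_abs_sub (r x) (r (1 / 2))
  linarith

lemma lip_hasSum {r : ℝ → ℝ} {L : ℝ} (hL : 0 ≤ L) (hr : LipOn r L) {x : ℝ}
    (hx : x ∈ Set.Ioo (0 : ℝ) 1) : HasSum (fun k => PK k x * r (psi k x)) (UR r x) := by
  obtain ⟨B, hB⟩ := lip_bdd hL hr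
  apply Summable.hasSum
  apply Summable.of_norm_bounded ((PK_hasSum hx.1.le).summable.mul_right B)
  intro k
  rw [Real.norm_eq_abs, abs_mul, abs_of_nonneg (PK_nonneg k hx.1.le)]
  exact mul_le_mul_of_nonneg_left (hB _ (psi_mem k hx)) (PK_nonneg k hx.1.le)

lemma lip_step {r : ℝ → ℝ} {L : ℝ} (hL : 0 ≤ L) (hr : LipOn r L) : LipOn (UR r) (7 / 8 * L) := by
  intro x hx y hy
  obtain ⟨B, hB⟩ := lip_bdd hL hr
  have hx0 := hx.1
  have hy0 := hy.1
  refine core x y hx.1.le hy.1.le (fun k => r (psi k x)) (fun k => r (psi k y))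
    (fun k => L * (1 / ((k : ℝ) + 1) ^ 2)) (fun k => L * (1 / (((k : ℝ) + 1) * (k + 2)))) ?_ ?_ _ ?_ ?_ _ _
    (lip_hasSum hL hr hx) (lip_hasSum hL hr hy)
  · intro k
    refine (hr _ (psi_mem k hx) _ (psi_mem k hy)).trans ?_
    rw [mul_assoc]
    apply mul_le_mul_of_nonneg_left _ hL
    have e : psi k x - psi k y = 1 / ((k + 1 + x) * (k + 1 + y)) * (y - x) := by
      unfold psi; field_simp; ring
    rw [e, abs_mul, abs_sub_comm y x, abs_of_nonneg (by positivity)]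
    apply mul_le_mul_of_nonneg_right _ (abs_nonneg _)
    apply div_le_div_of_nonneg_left (by norm_num) (by positivity)
    have : (0 : ℝ) ≤ k := by positivity
    nlinarith [mul_pos hx0 hy0]
  · intro k
    refine (hr _ (psi_mem _ hy) _ (psi_mem k hy)).trans ?_
    apply mul_le_mul_of_nonneg_left _ hL
    have e : psi (k + 1) y - psi k y = - (1 / ((k + 1 + y) * (k + 2 + y))) := by
      unfold psi; push_cast; field_simp; ring
    rw [e, abs_neg, abs_of_nonneg (by positivity)]
    apply div_le_div_of_nonneg_left (by norm_num) (by positivity)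
    have : (0 : ℝ) ≤ k := by positivity
    nlinarith
  · intro N
    have e1 : ∑ k ∈ Finset.range N, PK k x * (L * (1 / ((k : ℝ) + 1) ^ 2))
        = L * ∑ k ∈ Finset.range N, PK k x * (1 / ((k : ℝ) + 1) ^ 2) := by
      rw [Finset.mul_sum]; exact Finset.sum_congr rfl (fun k _ => by ring)
    have e2 : ∑ k ∈ Finset.range N, ((k : ℝ) + 1) / (k + 2) ^ 2 * (L * (1 / (((k : ℝ) + 1) * (k + 2))))
        = L * ∑ k ∈ Finset.range N, 1 / ((k : ℝ) + 2) ^ 3 := by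
      rw [Finset.mul_sum]; exact Finset.sum_congr rfl (fun k _ => by field_simp)
    rw [e1, e2]
    have := mul_le_mul_of_nonneg_left (bd1 N hx.1.le) hL
    have := mul_le_mul_of_nonneg_left (bd2 N) hL
    linarith
  · have h1 : Tendsto (fun N : ℕ => B / ((N : ℝ) + 1)) atTop (nhds 0) :=
      tendsto_const_nhds.div_atTop (tendsto_atTop_add_const_right _ _ tendsto_natCast_atTop_atTop)
    refine squeeze_zero (fun N => by positivity) (fun N => ?_) h1
    exact div_le_div_of_nonneg_right (hB _ (psi_mem N hy)) (by positivity)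

lemma neglog_psi (k : ℕ) (x : ℝ) : -Real.log (psi k x) = Real.log (k + 1 + x) := by
  rw [psi, one_div, Real.log_inv, neg_neg]

lemma log_diff {s t : ℝ} (k : ℕ) (hs : (k : ℝ) + 1 ≤ s) (ht : (k : ℝ) + 1 ≤ t) :
    |Real.log s - Real.log t| ≤ 1 / ((k : ℝ) + 1) * |s - t| := by
  have hk : (0 : ℝ) < k + 1 := by positivity
  have key : ∀ s t : ℝ, (k : ℝ) + 1 ≤ s → (k : ℝ) + 1 ≤ t →
      Real.log s - Real.log t ≤ 1 / ((k : ℝ) + 1) * |s - t| := by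
    intro s t hs ht
    have hs0 : 0 < s := by linarith
    have ht0 : 0 < t := by linarith
    rw [← Real.log_div hs0.ne' ht0.ne']
    have h1 := Real.log_le_sub_one_of_pos (div_pos hs0 ht0)
    have h2 : s / t - 1 = 1 / t * (s - t) := by field_simp
    rw [h2] at h1
    refine h1.trans ?_
    apply (mul_le_mul_of_nonneg_left (le_abs_self (s - t)) (by positivity)).trans
    apply mul_le_mul_of_nonneg_right _ (abs_nonneg _)
    exact one_div_le_one_div_of_le hk ht
  rw [abs_le]
  have := key s t hs ht
  have := key t s ht hs
  rw [abs_sub_comm t s] at this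
  constructor <;> linarith

lemma log_sqrt (k : ℕ) {x : ℝ} (hx : x ∈ Set.Ioo (0 : ℝ) 1) :
    Real.log (k + 1 + x) ≤ 4 * ((k : ℝ) + 1) ^ (1 / 2 : ℝ) := by
  have h0 := hx.1
  have h1 := Real.log_le_rpow_div (x := k + 1 + x) (by positivity) (ε := 1 / 2) (by norm_num)
  have h2 : ((k : ℝ) + 1 + x) ^ (1 / 2 : ℝ) ≤ (4 * ((k : ℝ) + 1)) ^ (1 / 2 : ℝ) := by
    apply Real.rpow_le_rpow (by positivity) _ (by norm_num)
    have : (0 : ℝ) ≤ k := by positivity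
    linarith [hx.2]
  rw [Real.mul_rpow (by norm_num) (by positivity)] at h2
  have h3 : (4 : ℝ) ^ (1 / 2 : ℝ) = 2 := by
    rw [← Real.sqrt_eq_rpow, show (4 : ℝ) = 2 ^ 2 by norm_num, Real.sqrt_sq (by norm_num)]
  rw [h3] at h2
  linarith

lemma log_hasSum {x : ℝ} (hx : x ∈ Set.Ioo (0 : ℝ) 1) :
    HasSum (fun k => PK k x * -Real.log (psi k x)) (UR (fun x => -Real.log x) x) := by
  have hx0 := hx.1
  apply Summable.hasSum
  have hs : Summable (fun k : ℕ => 8 * (1 / ((k + 1 : ℕ) : ℝ) ^ (3 / 2 : ℝ))) :=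
    ((summable_nat_add_iff 1).mpr (Real.summable_one_div_nat_rpow.mpr (by norm_num))).mul_left 8
  refine Summable.of_nonneg_of_le (fun k => ?_) (fun k => ?_) hs
  · rw [neglog_psi]
    refine mul_nonneg (PK_nonneg k hx.1.le) (Real.log_nonneg ?_)
    have : (0 : ℝ) ≤ k := by positivity
    linarith
  · rw [neglog_psi]
    have hP : PK k x ≤ 2 / ((k : ℝ) + 1) ^ 2 := by
      unfold PK
      rw [div_le_div_iff₀ (by positivity) (by positivity)]
      have : (0 : ℝ) ≤ k := by positivity
      have h1 : ((k : ℝ) + 1) ^ 2 ≤ (k + 1 + x) * (k + 2 + x) := by nlinarith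
      have h2 : 1 + x ≤ 2 := by linarith [hx.2]
      exact mul_le_mul h2 h1 (by positivity) (by norm_num)
    refine (mul_le_mul hP (log_sqrt k hx) (Real.log_nonneg ?_) (by positivity)).trans (le_of_eq ?_)
    · have : (0 : ℝ) ≤ k := by positivity
      linarith
    · push_cast
      have hk : (0 : ℝ) < k + 1 := by positivity
      have : ((k : ℝ) + 1) ^ 2 = ((k : ℝ) + 1) ^ (3 / 2 : ℝ) * ((k : ℝ) + 1) ^ (1 / 2 : ℝ) := by
        rw [← Real.rpow_add hk, ← Real.rpow_natCast]; norm_num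
      rw [this]
      field_simp
      norm_num

lemma log_step : LipOn (UR (fun x => -Real.log x)) 2 := by
  intro x hx y hy
  have hx0 := hx.1
  have hy0 := hy.1
  refine core x y hx.1.le hy.1.le (fun k => -Real.log (psi k x)) (fun k => -Real.log (psi k y))
    (fun k => (1 / ((k : ℝ) + 1))) (fun k => (1 / ((k : ℝ) + 1))) ?_ ?_ _ ?_ ?_ _ _
    (log_hasSum hx) (log_hasSum hy)
  · intro k
    simp only [neglog_psi]
    refine (log_diff k (by linarith) (by linarith)).trans (le_of_eq ?_)
    congr 2; ring
  · intro k
    simp only [neglog_psi]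
    refine (log_diff k (by push_cast; linarith) (by linarith)).trans (le_of_eq ?_)
    push_cast
    rw [show (k : ℝ) + 1 + 1 + y - (k + 1 + y) = 1 by ring]
    simp
  · intro N
    have e1 : ∑ k ∈ Finset.range N, PK k x * (1 / ((k : ℝ) + 1)) ≤ ∑ k ∈ Finset.range N, PK k x := by
      refine Finset.sum_le_sum fun k _ => ?_
      apply mul_le_of_le_one_right (PK_nonneg k hx0.le)
      rw [div_le_one (by positivity)]
      have : (0 : ℝ) ≤ k := by positivity
      linarith
    have e2 : ∑ k ∈ Finset.range N, ((k : ℝ) + 1) / (k + 2) ^ 2 * (1 / ((k : ℝ) + 1))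
        = ∑ k ∈ Finset.range N, 1 / ((k : ℝ) + 2) ^ 2 := by
      exact Finset.sum_congr rfl (fun k _ => by field_simp)
    rw [e2]
    have := bd3 N
    have := PK_sum_le N hx0.le
    linarith
  · have h1 : Tendsto (fun N : ℕ => 4 / ((N : ℝ) + 1) ^ (1 / 2 : ℝ)) atTop (nhds 0) :=
      tendsto_const_nhds.div_atTop ((tendsto_rpow_atTop (by norm_num)).comp
        (tendsto_atTop_add_const_right _ _ tendsto_natCast_atTop_atTop))
    refine squeeze_zero (fun N => by positivity) (fun N => ?_) h1
    have hN : (0 : ℝ) < N + 1 := by positivity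
    rw [neglog_psi, abs_of_nonneg (Real.log_nonneg (by have : (0 : ℝ) ≤ N := by positivity
                                                       linarith)),
      div_le_div_iff₀ hN (by positivity)]
    have h2 := mul_le_mul_of_nonneg_right (log_sqrt N hy) (show 0 ≤ ((N : ℝ) + 1) ^ (1 / 2 : ℝ) by positivity)
    refine h2.trans (le_of_eq ?_)
    rw [mul_assoc, ← Real.rpow_add hN]
    norm_num

lemma UR_nonneg {r : ℝ → ℝ} (hr : ∀ x ∈ Set.Ioo (0 : ℝ) 1, 0 ≤ r x) :
    ∀ x ∈ Set.Ioo (0 : ℝ) 1, 0 ≤ UR r x := fun x hx =>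
  tsum_nonneg (fun k => mul_nonneg (PK_nonneg k hx.1.le) (hr _ (psi_mem k hx)))
open scoped ENNReal

def hd (x : ℝ) : ℝ≥0∞ := ENNReal.ofReal (1 / ((1 + x) * Real.log 2))

def gm : Measure ℝ := (volume.restrict (Set.Ioo (0 : ℝ) 1)).withDensity hd

def UE (g : ℝ → ℝ≥0∞) (t : ℝ) : ℝ≥0∞ := ∑' k, ENNReal.ofReal (PK k t) * g (psi k t)

lemma hd_meas : Measurable hd := by unfold hd; fun_prop

lemma PK_meas (k : ℕ) : Measurable (PK k) := by unfold PK; fun_prop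

lemma psi_meas (k : ℕ) : Measurable (psi k) := by unfold psi; fun_prop

lemma GT_meas : Measurable GT := by
  unfold GT; fun_prop

lemma UE_meas {g : ℝ → ℝ≥0∞} (hg : Measurable g) : Measurable (UE g) := by
  unfold UE
  refine Measurable.tsum fun k => ?_
  exact (PK_meas k).ennreal_ofReal.mul (hg.comp (psi_meas k))

lemma GT_psi (k : ℕ) {t : ℝ} (ht : t ∈ Set.Ico (0 : ℝ) 1) : GT (psi k t) = t := by
  unfold GT psi
  rw [one_div_one_div]
  have : (k : ℝ) + 1 + t = t + ((k + 1 : ℕ) : ℝ) := by push_cast; ring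
  rw [this, Int.fract_add_natCast, Int.fract_eq_self.mpr ht]

lemma iUnion_psi : (⋃ k : ℕ, psi k '' Set.Ico (0 : ℝ) 1) = Set.Ioc 0 1 := by
  ext x
  simp only [Set.mem_iUnion, Set.mem_image]
  constructor
  · rintro ⟨k, t, ht, rfl⟩
    have := ht.1
    unfold psi
    refine ⟨by positivity, ?_⟩
    rw [div_le_one (by positivity)]
    have : (0 : ℝ) ≤ k := by positivity
    linarith
  · intro hx
    have h1 : 1 ≤ 1 / x := by rw [le_div_iff₀ hx.1]; linarith [hx.2]
    have h2 : 1 ≤ ⌊1 / x⌋₊ := Nat.le_floor (by simpa using h1)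
    obtain ⟨k, hk⟩ := Nat.exists_eq_add_of_le' h2
    refine ⟨k, Int.fract (1 / x), ⟨Int.fract_nonneg _, Int.fract_lt_one _⟩, ?_⟩
    unfold psi
    have h3 : (k : ℝ) + 1 = (⌊1 / x⌋ : ℝ) := by
      rw [← natCast_floor_eq_intCast_floor (by linarith), hk]; push_cast; ring
    rw [h3, Int.floor_add_fract, one_div_one_div]

lemma psi_disj : Pairwise (Function.onFun Disjoint fun k : ℕ => psi k '' Set.Ico (0 : ℝ) 1) := by
  intro i j hij
  rw [Function.onFun, Set.disjoint_left]
  rintro x ⟨s, hs, rfl⟩ ⟨t, ht, h⟩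
  apply hij
  have hs1 := GT_psi i hs
  have ht1 := GT_psi j ht
  rw [h, hs1] at ht1
  subst ht1
  unfold psi at h
  rw [one_div, one_div, inv_inj] at h
  have : (i : ℝ) = j := by linarith
  exact_mod_cast this

lemma psi_inj (k : ℕ) : Set.InjOn (psi k) (Set.Ico (0 : ℝ) 1) := by
  intro s hs t ht h
  rw [← GT_psi k hs, h, GT_psi k ht]

lemma cv {G : ℝ → ℝ≥0∞} (hG : Measurable G) :
    ∫⁻ x in Set.Ioo (0 : ℝ) 1, G x
      = ∫⁻ t in Set.Ioo (0 : ℝ) 1, ∑' k : ℕ, ENNReal.ofReal (1 / (k + 1 + t) ^ 2) * G (psi k t) := by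
  have hder : ∀ k : ℕ, ∀ t ∈ Set.Ico (0 : ℝ) 1,
      HasDerivWithinAt (psi k) (-(1 / (k + 1 + t) ^ 2)) (Set.Ico (0 : ℝ) 1) t := by
    intro k t ht
    have h0 : (k : ℝ) + 1 + t ≠ 0 := by have := ht.1; positivity
    have h1 : HasDerivAt (fun x : ℝ => (k : ℝ) + 1 + x) 1 t := (hasDerivAt_id' t).const_add _
    have h3 := h1.fun_inv h0
    have h2 : psi k = (fun x => ((k : ℝ) + 1 + x)⁻¹) := by
      ext y; simp [psi]
    rw [h2, ← neg_div]
    exact h3.hasDerivWithinAt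
  have hm : ∀ k : ℕ, MeasurableSet (psi k '' Set.Ico (0 : ℝ) 1) := fun k =>
    measurable_image_of_fderivWithin measurableSet_Ico
      (fun t ht => (hder k t ht).hasFDerivWithinAt) (psi_inj k)
  have hL : ∫⁻ x in Set.Ioo (0 : ℝ) 1, G x = ∑' k : ℕ, ∫⁻ x in psi k '' Set.Ico (0 : ℝ) 1, G x := by
    rw [Measure.restrict_congr_set Ioo_ae_eq_Ioc, ← iUnion_psi, lintegral_iUnion hm psi_disj]
  rw [hL, lintegral_tsum]
  · refine tsum_congr fun k => ?_
    rw [lintegral_image_eq_lintegral_abs_deriv_mul measurableSet_Ico (hder k) (psi_inj k),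
      Measure.restrict_congr_set Ioo_ae_eq_Ico]
    refine lintegral_congr fun t => ?_
    rw [abs_neg, abs_of_nonneg (by positivity)]
  · intro k
    refine Measurable.aemeasurable ?_
    refine Measurable.mul ?_ (hG.comp (psi_meas k))
    fun_prop

lemma gm_lintegral {g : ℝ → ℝ≥0∞} (hg : Measurable g) :
    ∫⁻ x, g x ∂gm = ∫⁻ x in Set.Ioo (0 : ℝ) 1, hd x * g x := by
  unfold gm
  rw [lintegral_withDensity_eq_lintegral_mul _ hd_meas hg]; rfl

lemma gm_ae {p : ℝ → Prop} : (∀ᵐ x ∂gm, p x) ↔ ∀ᵐ x ∂(volume.restrict (Set.Ioo (0 : ℝ) 1)), p x := by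
  unfold gm
  rw [ae_withDensity_iff hd_meas]
  constructor
  · intro h
    filter_upwards [h, ae_restrict_mem measurableSet_Ioo] with x hx hx1
    apply hx
    have := hx1.1
    have := Real.log_pos (by norm_num : (1 : ℝ) < 2)
    simp only [hd, ne_eq, ENNReal.ofReal_eq_zero, not_le]
    positivity
  · intro h
    filter_upwards [h] with x hx _ using hx

lemma gm_mem : ∀ᵐ x ∂gm, x ∈ Set.Ioo (0 : ℝ) 1 := by
  rw [gm_ae]; exact ae_restrict_mem measurableSet_Ioo

lemma duality {f g : ℝ → ℝ≥0∞} (hf : Measurable f) (hg : Measurable g) :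
    ∫⁻ x, g x * f (GT x) ∂gm = ∫⁻ x, UE g x * f x ∂gm := by
  have m1 : Measurable (fun x => g x * f (GT x)) := hg.mul (hf.comp GT_meas)
  have m2 : Measurable (fun x => UE g x * f x) := (UE_meas hg).mul hf
  have m3 : Measurable (fun x => hd x * (g x * f (GT x))) := hd_meas.mul m1
  rw [gm_lintegral m1, gm_lintegral m2, cv m3]
  refine setLIntegral_congr_fun measurableSet_Ioo fun t ht => ?_
  have ht0 := ht.1
  have hl := Real.log_pos (by norm_num : (1 : ℝ) < 2)
  rw [UE, ← ENNReal.tsum_mul_right, ← ENNReal.tsum_mul_left]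
  refine tsum_congr fun k => ?_
  rw [GT_psi k ⟨ht.1.le, ht.2⟩]
  have : ENNReal.ofReal (1 / (k + 1 + t) ^ 2) * hd (psi k t) = hd t * ENNReal.ofReal (PK k t) := by
    unfold hd
    rw [← ENNReal.ofReal_mul (by positivity), ← ENNReal.ofReal_mul (by positivity)]
    congr 1
    unfold psi PK
    have h1 : (k : ℝ) + 1 + t ≠ 0 := by positivity
    have h2 : (k : ℝ) + 2 + t ≠ 0 := by positivity
    have h3 : (k : ℝ) + 1 + t + 1 ≠ 0 := by positivity
    field_simp
    ring
  calc _ = (ENNReal.ofReal (1 / (k + 1 + t) ^ 2) * hd (psi k t)) * (g (psi k t) * f t) := by ring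
    _ = _ := by rw [this]; ring

lemma UE_one {t : ℝ} (ht : t ∈ Set.Ioo (0 : ℝ) 1) : UE (fun _ => 1) t = 1 := by
  unfold UE
  simp only [mul_one]
  rw [← ENNReal.ofReal_tsum_of_nonneg (fun k => PK_nonneg k ht.1.le) (PK_hasSum ht.1.le).summable,
    (PK_hasSum ht.1.le).tsum_eq, ENNReal.ofReal_one]

lemma invar {f : ℝ → ℝ≥0∞} (hf : Measurable f) :
    ∫⁻ x, f (GT x) ∂gm = ∫⁻ x, f x ∂gm := by
  have := duality hf (g := fun _ => 1) measurable_const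
  simp only [one_mul] at this
  rw [this]
  refine lintegral_congr_ae ?_
  filter_upwards [gm_mem] with x hx
  rw [UE_one hx, one_mul]

lemma duality_iter {f g : ℝ → ℝ≥0∞} (hf : Measurable f) (hg : Measurable g) (n : ℕ) :
    Measurable (UE^[n] g) ∧ ∫⁻ x, g x * f (GT^[n] x) ∂gm = ∫⁻ x, UE^[n] g x * f x ∂gm := by
  induction n generalizing g with
  | zero => exact ⟨hg, rfl⟩
  | succ n ih =>
    refine ⟨(ih (UE_meas hg)).1, ?_⟩
    simp only [Function.iterate_succ_apply]
    rw [← (ih (UE_meas hg)).2]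
    exact duality (hf.comp (GT_meas.iterate n)) hg

lemma gm_univ : gm Set.univ = 1 := by
  have hl := Real.log_pos (by norm_num : (1 : ℝ) < 2)
  have h0 : gm Set.univ = ∫⁻ x, 1 ∂gm := by simp
  rw [h0, gm_lintegral measurable_const]
  simp only [mul_one]
  have hder : ∀ x ∈ Set.Ioo (0 : ℝ) 1,
      HasDerivAt (fun x => Real.log (1 + x) / Real.log 2) (1 / ((1 + x) * Real.log 2)) x := by
    intro x hx
    have := hx.1
    have h1 : HasDerivAt (fun x : ℝ => 1 + x) 1 x := (hasDerivAt_id' x).const_add _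
    have h := (h1.log (by positivity)).div_const (Real.log 2)
    rwa [div_div] at h
  have hcont : ContinuousOn (fun x => Real.log (1 + x) / Real.log 2) (Set.Icc (0 : ℝ) 1) := by
    apply ContinuousOn.div_const
    apply ContinuousOn.log (by fun_prop)
    intro x hx
    linarith [hx.1]
  have hnn : ∀ x ∈ Set.Ioo (0 : ℝ) 1, 0 ≤ 1 / ((1 + x) * Real.log 2) := by
    intro x hx
    have := hx.1
    positivity
  have hint := intervalIntegral.integrableOn_deriv_of_nonneg hcont hder hnn
  have hI := intervalIntegral.integral_eq_sub_of_hasDerivAt_of_le (zero_le_one) hcont hder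
    ((intervalIntegrable_iff_integrableOn_Ioc_of_le zero_le_one).mpr hint)
  rw [intervalIntegral.integral_of_le zero_le_one] at hI
  unfold hd
  rw [Measure.restrict_congr_set Ioo_ae_eq_Ioc, ← ofReal_integral_eq_lintegral_ofReal hint, hI]
  · norm_num
  · filter_upwards [ae_restrict_mem measurableSet_Ioc] with x hx
    have := hx.1
    simp only [Pi.zero_apply]
    positivity

instance gm_prob : IsProbabilityMeasure gm := ⟨gm_univ⟩

def Phi (x : ℝ) : ℝ≥0∞ := ENNReal.ofReal (-Real.log x)

lemma Phi_meas : Measurable Phi := by unfold Phi; fun_prop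

lemma Phi_iter (j : ℕ) : ∃ r : ℝ → ℝ, (∀ x ∈ Set.Ioo (0 : ℝ) 1, 0 ≤ r x) ∧
    LipOn r (2 * (7 / 8) ^ j) ∧ ∀ x ∈ Set.Ioo (0 : ℝ) 1, UE^[j + 1] Phi x = ENNReal.ofReal (r x) := by
  induction j with
  | zero =>
    have hnn : ∀ x ∈ Set.Ioo (0 : ℝ) 1, 0 ≤ -Real.log x := fun x hx =>
      neg_nonneg.mpr (Real.log_nonpos hx.1.le hx.2.le)
    refine ⟨UR (fun x => -Real.log x), UR_nonneg hnn, by simpa using log_step, fun x hx => ?_⟩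
    simp only [zero_add, Function.iterate_one, UE, Phi]
    rw [UR, ENNReal.ofReal_tsum_of_nonneg (fun k => mul_nonneg (PK_nonneg k hx.1.le)
      (hnn _ (psi_mem k hx))) (log_hasSum hx).summable]
    exact tsum_congr fun k => (ENNReal.ofReal_mul (PK_nonneg k hx.1.le)).symm
  | succ j ih =>
    obtain ⟨r, h1, h2, h3⟩ := ih
    have hL : (0 : ℝ) ≤ 2 * (7 / 8) ^ j := by positivity
    refine ⟨UR r, UR_nonneg h1, ?_, fun x hx => ?_⟩
    · convert lip_step hL h2 using 1
      ring
    · rw [Function.iterate_succ_apply', UE, UR, ENNReal.ofReal_tsum_of_nonneg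
        (fun k => mul_nonneg (PK_nonneg k hx.1.le) (h1 _ (psi_mem k hx))) (lip_hasSum hL h2 hx).summable]
      refine tsum_congr fun k => ?_
      rw [h3 _ (psi_mem k hx), ENNReal.ofReal_mul (PK_nonneg k hx.1.le)]

lemma Phi_iter_le (j : ℕ) {x : ℝ} (hx : x ∈ Set.Ioo (0 : ℝ) 1) :
    UE^[j + 1] Phi x ≤ ∫⁻ y, Phi y ∂gm + ENNReal.ofReal (2 * (7 / 8) ^ j) := by
  obtain ⟨r, h1, h2, h3⟩ := Phi_iter j
  have hmean : ∫⁻ y, UE^[j + 1] Phi y ∂gm = ∫⁻ y, Phi y ∂gm := by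
    have := (duality_iter (f := fun _ => 1) measurable_const Phi_meas (j + 1)).2
    simpa using this.symm
  calc UE^[j + 1] Phi x = ∫⁻ _, UE^[j + 1] Phi x ∂gm := by simp
    _ ≤ ∫⁻ y, (UE^[j + 1] Phi y + ENNReal.ofReal (2 * (7 / 8) ^ j)) ∂gm := by
      refine lintegral_mono_ae ?_
      filter_upwards [gm_mem] with y hy
      rw [h3 x hx, h3 y hy, ← ENNReal.ofReal_add (h1 y hy) (by positivity)]
      apply ENNReal.ofReal_le_ofReal
      have h4 := le_of_abs_le (h2 x hx y hy)
      have h5 : |x - y| ≤ 1 := by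
        rw [abs_le]; constructor <;> linarith [hx.1, hx.2, hy.1, hy.2]
      have h6 : (0 : ℝ) ≤ 2 * (7 / 8) ^ j := by positivity
      nlinarith
    _ = _ := by
      rw [lintegral_add_right _ measurable_const, hmean]
      simp

lemma corr (j : ℕ) : ∫⁻ x, Phi x * Phi (GT^[j + 1] x) ∂gm
    ≤ (∫⁻ y, Phi y ∂gm + ENNReal.ofReal (2 * (7 / 8) ^ j)) * ∫⁻ y, Phi y ∂gm := by
  rw [(duality_iter Phi_meas Phi_meas (j + 1)).2, ← lintegral_const_mul _ Phi_meas]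
  refine lintegral_mono_ae ?_
  filter_upwards [gm_mem] with y hy
  gcongr
  exact Phi_iter_le j hy
lemma pow_log_int (n : ℕ) :
    IntegrableOn (fun x : ℝ => x ^ n * -Real.log x) (Set.Ioc 0 1) ∧
    ∫ x in Set.Ioc (0 : ℝ) 1, x ^ n * -Real.log x = 1 / ((n : ℝ) + 1) ^ 2 := by
  set F : ℝ → ℝ := fun x => x ^ n * -(x * Real.log x) / (n + 1) + x ^ (n + 1) / ((n : ℝ) + 1) ^ 2 with hF
  have hcont : ContinuousOn F (Set.Icc (0 : ℝ) 1) := by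
    have := Real.continuous_mul_log
    apply Continuous.continuousOn
    rw [hF]
    fun_prop
  have hder : ∀ x ∈ Set.Ioo (0 : ℝ) 1, HasDerivAt F (x ^ n * -Real.log x) x := by
    intro x hx
    have hx0 := hx.1.ne'
    have h1 := Real.hasDerivAt_log hx0
    have h2 : HasDerivAt (fun x : ℝ => x ^ (n + 1)) (((n + 1 : ℕ) : ℝ) * x ^ n) x := by
      simpa using hasDerivAt_pow (n + 1) x
    have h3 := ((h2.fun_mul h1).fun_neg.div_const ((n : ℝ) + 1)).fun_add (h2.div_const (((n : ℝ) + 1) ^ 2))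
    have e : F = fun x => -(x ^ (n + 1) * Real.log x) / ((n : ℝ) + 1)
        + x ^ (n + 1) / ((n : ℝ) + 1) ^ 2 := by
      ext y; simp only [hF]; ring
    rw [e]
    refine h3.congr_deriv ?_
    push_cast
    field_simp
    ring
  have hnn : ∀ x ∈ Set.Ioo (0 : ℝ) 1, 0 ≤ x ^ n * -Real.log x := by
    intro x hx
    exact mul_nonneg (pow_nonneg hx.1.le _) (neg_nonneg.mpr (Real.log_nonpos hx.1.le hx.2.le))
  have hint := intervalIntegral.integrableOn_deriv_of_nonneg hcont hder hnn
  have hI := intervalIntegral.integral_eq_sub_of_hasDerivAt_of_le (zero_le_one) hcont hder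
    ((intervalIntegrable_iff_integrableOn_Ioc_of_le zero_le_one).mpr hint)
  rw [intervalIntegral.integral_of_le zero_le_one] at hI
  refine ⟨hint, hI.trans ?_⟩
  simp [hF]

lemma alt_sum : HasSum (fun n : ℕ => (-1 : ℝ) ^ n * (1 / ((n : ℝ) + 1) ^ 2)) (Real.pi ^ 2 / 12) := by
  have h0 := hasSum_zeta_two
  have hE : HasSum (fun k : ℕ => 1 / ((2 * k : ℕ) : ℝ) ^ 2) (Real.pi ^ 2 / 24) := by
    have := h0.mul_left (1 / 4)
    have e : (fun k : ℕ => 1 / ((2 * k : ℕ) : ℝ) ^ 2) = fun k : ℕ => 1 / 4 * (1 / (k : ℝ) ^ 2) := by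
      ext k; push_cast; rw [mul_pow, one_div_mul_one_div]; norm_num
    rw [e, show Real.pi ^ 2 / 24 = 1 / 4 * (Real.pi ^ 2 / 6) by ring]
    exact this
  have hOs : Summable (fun k : ℕ => 1 / ((2 * k + 1 : ℕ) : ℝ) ^ 2) :=
    h0.summable.comp_injective (i := fun k : ℕ => 2 * k + 1) (fun a b h => by simpa using h)
  have hO : HasSum (fun k : ℕ => 1 / ((2 * k + 1 : ℕ) : ℝ) ^ 2) (Real.pi ^ 2 / 8) := by
    have h1 := HasSum.even_add_odd (f := fun n : ℕ => 1 / (n : ℝ) ^ 2) hE hOs.hasSum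
    have h2 := h1.unique h0
    have : ∑' k : ℕ, 1 / ((2 * k + 1 : ℕ) : ℝ) ^ 2 = Real.pi ^ 2 / 8 := by linarith
    rw [← this]
    exact hOs.hasSum
  have hE' : HasSum (fun k : ℕ => 1 / ((2 * (k + 1) : ℕ) : ℝ) ^ 2) (Real.pi ^ 2 / 24) := by
    have := (hasSum_nat_add_iff' (f := fun k : ℕ => 1 / ((2 * k : ℕ) : ℝ) ^ 2) 1).mpr hE
    simpa using this
  have := HasSum.even_add_odd (f := fun n : ℕ => (-1 : ℝ) ^ n * (1 / ((n : ℝ) + 1) ^ 2))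
    (m := Real.pi ^ 2 / 8) (m' := -(Real.pi ^ 2 / 24)) ?_ ?_
  · convert this using 1; ring
  · convert hO using 2 with k
    simp [pow_mul]
  · refine hE'.neg.congr_fun ?_
    intro k
    rw [pow_succ, pow_mul]
    push_cast
    norm_num
    congr 1; ring

lemma mean_int : IntegrableOn (fun x : ℝ => (1 + x)⁻¹ * -Real.log x) (Set.Ioo 0 1) ∧
    ∫ x in Set.Ioo (0 : ℝ) 1, (1 + x)⁻¹ * -Real.log x = Real.pi ^ 2 / 12 := by
  have hint : ∀ n, IntegrableOn (fun x : ℝ => x ^ n * -Real.log x) (Set.Ioo 0 1) := fun n =>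
    (pow_log_int n).1.mono_set Set.Ioo_subset_Ioc_self
  have hval : ∀ n : ℕ, ∫ x in Set.Ioo (0 : ℝ) 1, x ^ n * -Real.log x = 1 / ((n : ℝ) + 1) ^ 2 := fun n => by
    rw [← integral_Ioc_eq_integral_Ioo]; exact (pow_log_int n).2
  constructor
  · have h0 := hint 0
    refine Integrable.mono' h0 (by fun_prop) ?_
    filter_upwards [ae_restrict_mem measurableSet_Ioo] with x hx
    have h1 : 0 ≤ -Real.log x := neg_nonneg.mpr (Real.log_nonpos hx.1.le hx.2.le)
    have h2 : (1 + x)⁻¹ ≤ 1 := inv_le_one_of_one_le₀ (by linarith [hx.1])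
    have h3 : 0 ≤ (1 + x)⁻¹ := by have := hx.1; positivity
    rw [Real.norm_eq_abs, abs_of_nonneg (mul_nonneg h3 h1)]
    simp only [pow_zero]
    exact mul_le_mul_of_nonneg_right h2 h1
  · have hn : ∀ n : ℕ, ∫ x in Set.Ioo (0 : ℝ) 1, ‖(-1 : ℝ) ^ n * (x ^ n * -Real.log x)‖
        = 1 / ((n : ℝ) + 1) ^ 2 := by
      intro n
      rw [← hval n]
      refine setIntegral_congr_fun measurableSet_Ioo fun x hx => ?_
      have h1 : 0 ≤ -Real.log x := neg_nonneg.mpr (Real.log_nonpos hx.1.le hx.2.le)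
      have h2 : 0 ≤ x ^ n := pow_nonneg hx.1.le _
      simp only [norm_mul, norm_pow, norm_neg, norm_one, one_pow, one_mul]
      rw [Real.norm_eq_abs, Real.norm_eq_abs, abs_of_nonneg hx.1.le, abs_of_nonpos (by linarith)]
    have hsum : Summable (fun n : ℕ => ∫ x in Set.Ioo (0 : ℝ) 1, ‖(-1 : ℝ) ^ n * (x ^ n * -Real.log x)‖) := by
      simp_rw [hn]
      have := (summable_nat_add_iff (f := fun n : ℕ => 1 / (n : ℝ) ^ 2) 1).mpr hasSum_zeta_two.summable
      simpa using this
    have h := hasSum_integral_of_summable_integral_norm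
      (F := fun (n : ℕ) (x : ℝ) => (-1 : ℝ) ^ n * (x ^ n * -Real.log x))
      (fun n => (hint n).const_mul _) hsum
    simp_rw [integral_const_mul, hval] at h
    rw [← h.unique alt_sum]
    refine setIntegral_congr_fun measurableSet_Ioo fun x hx => ?_
    have hg := hasSum_geometric_of_norm_lt_one (ξ := -x) (by
      rw [norm_neg, Real.norm_eq_abs, abs_of_pos hx.1]; exact hx.2)
    rw [sub_neg_eq_add] at hg
    rw [← (hg.mul_right (-Real.log x)).tsum_eq]
    refine tsum_congr fun n => ?_
    rw [neg_pow]; ring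

lemma mean_eq : ∫⁻ x, Phi x ∂gm = ENNReal.ofReal (Real.pi ^ 2 / (12 * Real.log 2)) := by
  have hl := Real.log_pos (by norm_num : (1 : ℝ) < 2)
  have h1 : Real.pi ^ 2 / (12 * Real.log 2)
      = ∫ x in Set.Ioo (0 : ℝ) 1, (1 / Real.log 2) * ((1 + x)⁻¹ * -Real.log x) := by
    rw [integral_const_mul, mean_int.2]; field_simp
  rw [gm_lintegral Phi_meas, h1, ofReal_integral_eq_lintegral_ofReal (mean_int.1.const_mul _)]
  · refine setLIntegral_congr_fun measurableSet_Ioo fun x hx => ?_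
    have := hx.1
    simp only [hd, Phi]
    rw [← ENNReal.ofReal_mul (by positivity)]
    congr 1
    field_simp
  · filter_upwards [ae_restrict_mem measurableSet_Ioo] with x hx
    have h1 : 0 ≤ -Real.log x := neg_nonneg.mpr (Real.log_nonpos hx.1.le hx.2.le)
    have := hx.1
    simp only [Pi.zero_apply]
    positivity

lemma sq_fin : ∫⁻ x, Phi x ^ 2 ∂gm < ⊤ := by
  have hl := Real.log_pos (by norm_num : (1 : ℝ) < 2)
  rw [gm_lintegral (Phi_meas.pow_const 2)]
  have hI : IntegrableOn (fun x : ℝ => (1 / Real.log 2) * (16 * x ^ (-1 / 2 : ℝ))) (Set.Ioo 0 1) := by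
    have := intervalIntegral.intervalIntegrable_rpow' (a := 0) (b := 1) (r := -1 / 2) (by norm_num)
    rw [intervalIntegrable_iff_integrableOn_Ioo_of_le zero_le_one] at this
    exact (this.const_mul 16).const_mul _
  refine lt_of_le_of_lt (setLIntegral_mono' measurableSet_Ioo ?_) hI.lintegral_lt_top
  intro x hx
  have h0 := hx.1
  have h1 : 0 ≤ -Real.log x := neg_nonneg.mpr (Real.log_nonpos hx.1.le hx.2.le)
  simp only [hd, Phi]
  rw [← ENNReal.ofReal_pow h1, ← ENNReal.ofReal_mul (by positivity)]
  apply ENNReal.ofReal_le_ofReal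
  have h2 := Real.log_le_rpow_div (x := x⁻¹) (by positivity) (ε := 1 / 4) (by norm_num)
  rw [Real.log_inv] at h2
  have h3 : (-Real.log x) ^ 2 ≤ 16 * x ^ (-1 / 2 : ℝ) := by
    refine (pow_le_pow_left₀ h1 h2 2).trans (le_of_eq ?_)
    rw [Real.inv_rpow h0.le, ← Real.rpow_neg h0.le, div_pow, ← Real.rpow_natCast, ← Real.rpow_mul h0.le]
    norm_num
    ring
  apply mul_le_mul _ h3 (by positivity) (by positivity)
  apply one_div_le_one_div_of_le hl
  nlinarith
def SE (n : ℕ) (x : ℝ) : ℝ≥0∞ := ∑ i ∈ Finset.range n, Phi (GT^[i] x)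

def SR (n : ℕ) (x : ℝ) : ℝ := ∑ i ∈ Finset.range n, -Real.log (GT^[i] x)

lemma SE_meas (n : ℕ) : Measurable (SE n) := by
  unfold SE
  exact Finset.measurable_fun_sum _ fun i _ => Phi_meas.comp (GT_meas.iterate i)

lemma SR_meas (n : ℕ) : Measurable (SR n) := by
  unfold SR
  exact Finset.measurable_fun_sum _ fun i _ =>
    (Real.measurable_log.comp (GT_meas.iterate i)).neg

lemma SE_succ (n : ℕ) (x : ℝ) : SE (n + 1) x = Phi x + SE n (GT x) := by
  unfold SE
  rw [Finset.sum_range_succ', add_comm]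
  rfl

lemma geom_le16 (n : ℕ) : ∑ i ∈ Finset.range n, ENNReal.ofReal (2 * (7 / 8) ^ i) ≤ 16 := by
  rw [← ENNReal.ofReal_sum_of_nonneg (fun i _ => by positivity)]
  rw [show (16 : ℝ≥0∞) = ENNReal.ofReal 16 by simp]
  apply ENNReal.ofReal_le_ofReal
  rw [← Finset.mul_sum, geom_sum_eq (by norm_num)]
  have : (0 : ℝ) ≤ (7 / 8) ^ n := by positivity
  have e : ((7 / 8 : ℝ) ^ n - 1) / (7 / 8 - 1) = 8 * (1 - (7 / 8) ^ n) := by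
    rw [div_eq_iff (by norm_num)]; ring
  rw [e]; linarith

lemma cross (n : ℕ) : ∫⁻ x, Phi x * SE n (GT x) ∂gm
    ≤ (n * ∫⁻ y, Phi y ∂gm + 16) * ∫⁻ y, Phi y ∂gm := by
  have h : ∀ x, Phi x * SE n (GT x) = ∑ i ∈ Finset.range n, Phi x * Phi (GT^[i + 1] x) := by
    intro x
    rw [SE, Finset.mul_sum]; rfl
  simp_rw [h]
  rw [lintegral_finsetSum]
  · refine (Finset.sum_le_sum fun i _ => corr i).trans ?_
    rw [← Finset.sum_mul, Finset.sum_add_distrib]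
    gcongr
    · simp
    · exact geom_le16 n
  · intro i _
    exact Phi_meas.mul (Phi_meas.comp (GT_meas.iterate (i + 1)))

lemma SE_mean (n : ℕ) : ∫⁻ x, SE n x ∂gm = n * ∫⁻ y, Phi y ∂gm := by
  induction n with
  | zero => simp [SE]
  | succ n ih =>
    simp_rw [SE_succ]
    rw [lintegral_add_left Phi_meas, invar (SE_meas n), ih]
    push_cast; ring

lemma SE_sq (n : ℕ) : ∫⁻ x, SE n x ^ 2 ∂gm
    ≤ (n * ∫⁻ y, Phi y ∂gm) ^ 2 + n * (∫⁻ y, Phi y ^ 2 ∂gm + 32 * ∫⁻ y, Phi y ∂gm) := by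
  induction n with
  | zero => simp [SE]
  | succ n ih =>
    have h : ∀ x, SE (n + 1) x ^ 2 = (Phi x ^ 2 + 2 * (Phi x * SE n (GT x))) + SE n (GT x) ^ 2 := by
      intro x; rw [SE_succ]; ring
    have m0 : Measurable (fun x => Phi x * SE n (GT x)) := Phi_meas.mul ((SE_meas n).comp GT_meas)
    have m1 : Measurable (fun x => Phi x ^ 2) := Phi_meas.pow_const 2
    have m2 : Measurable (fun x => SE n x ^ 2) := (SE_meas n).pow_const 2
    have m3 : Measurable (fun x => Phi x ^ 2 + 2 * (Phi x * SE n (GT x))) := m1.add (m0.const_mul 2)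
    simp_rw [h]
    rw [lintegral_add_left m3, lintegral_add_left m1, lintegral_const_mul _ m0, invar m2]
    set M := ∫⁻ y, Phi y ∂gm
    set V := ∫⁻ y, Phi y ^ 2 ∂gm
    calc _ ≤ V + 2 * ((n * M + 16) * M) + ((n * M) ^ 2 + n * (V + 32 * M)) := by
          gcongr
          exact cross n
      _ ≤ V + 2 * ((n * M + 16) * M) + ((n * M) ^ 2 + n * (V + 32 * M)) + M ^ 2 := le_self_add
      _ = _ := by push_cast; ring

lemma GT_mem (x : ℝ) : GT x ∈ Set.Ico (0 : ℝ) 1 := ⟨Int.fract_nonneg _, Int.fract_lt_one _⟩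

lemma neglog_nonneg {x : ℝ} (hx : x ∈ Set.Ioo (0 : ℝ) 1) (i : ℕ) : 0 ≤ -Real.log (GT^[i] x) := by
  cases i with
  | zero => exact neg_nonneg.mpr (Real.log_nonpos hx.1.le hx.2.le)
  | succ i =>
    rw [Function.iterate_succ_apply']
    exact neg_nonneg.mpr (Real.log_nonpos (GT_mem _).1 (GT_mem _).2.le)

lemma SE_eq {x : ℝ} (hx : x ∈ Set.Ioo (0 : ℝ) 1) (n : ℕ) : SE n x = ENNReal.ofReal (SR n x) := by
  unfold SE SR
  rw [ENNReal.ofReal_sum_of_nonneg (fun i _ => neglog_nonneg hx i)]; rfl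

def mm : ℝ := Real.pi ^ 2 / (12 * Real.log 2)

lemma mm_nonneg : 0 ≤ mm := by
  have hl := Real.log_pos (by norm_num : (1 : ℝ) < 2)
  unfold mm; positivity

lemma var_bound : ∃ K : ℝ≥0∞, K < ⊤ ∧ ∀ n : ℕ,
    ∫⁻ x, ENNReal.ofReal ((SR n x - n * mm) ^ 2) ∂gm ≤ n * K := by
  have hM : ∫⁻ y, Phi y ∂gm = ENNReal.ofReal mm := mean_eq
  refine ⟨∫⁻ y, Phi y ^ 2 ∂gm + 32 * ∫⁻ y, Phi y ∂gm, ?_, fun n => ?_⟩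
  · rw [hM]
    exact ENNReal.add_lt_top.mpr ⟨sq_fin, ENNReal.mul_lt_top (by simp) (by simp)⟩
  · have hsq := SE_sq n
    set K := ∫⁻ y, Phi y ^ 2 ∂gm + 32 * ∫⁻ y, Phi y ∂gm
    have hmn := SE_mean n
    rw [hM] at hsq hmn
    have hnM : (n : ℝ≥0∞) * ENNReal.ofReal mm = ENNReal.ofReal (n * mm) := by
      rw [ENNReal.ofReal_mul (by positivity)]; simp
    rw [hnM] at hsq hmn
    set A := ENNReal.ofReal (n * mm) with hA
    have hA0 : 0 ≤ n * mm := mul_nonneg (by positivity) mm_nonneg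
    have hpt : ∀ᵐ x ∂gm, ENNReal.ofReal ((SR n x - n * mm) ^ 2) + 2 * A * SE n x
        = SE n x ^ 2 + A ^ 2 := by
      filter_upwards [gm_mem] with x hx
      have hS : 0 ≤ SR n x := Finset.sum_nonneg fun i _ => neglog_nonneg hx i
      rw [SE_eq hx, hA, show (2 : ℝ≥0∞) = ENNReal.ofReal 2 by simp,
        ← ENNReal.ofReal_mul (by norm_num), ← ENNReal.ofReal_mul (by positivity),
        ← ENNReal.ofReal_pow hS, ← ENNReal.ofReal_pow hA0,
        ← ENNReal.ofReal_add (by positivity) (by positivity),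
        ← ENNReal.ofReal_add (by positivity) (by positivity)]
      congr 1; ring
    have hI := lintegral_congr_ae hpt
    rw [lintegral_add_right _ ((SE_meas n).const_mul _), lintegral_const_mul _ (SE_meas n),
      lintegral_add_right _ measurable_const, hmn] at hI
    simp only [lintegral_const, measure_univ, mul_one] at hI
    have hAfin : 2 * A * A ≠ ⊤ := by
      have hAt : A ≠ ⊤ := ENNReal.ofReal_ne_top
      exact ENNReal.mul_ne_top (ENNReal.mul_ne_top (by simp) hAt) hAt
    rw [← ENNReal.add_le_add_iff_right hAfin, hI]
    calc _ ≤ (A ^ 2 + n * K) + A ^ 2 := by gcongr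
      _ = _ := by ring

lemma sub_conv : ∀ᵐ x ∂gm, Tendsto (fun N : ℕ => SR ((N + 1) ^ 2) x / (((N + 1) ^ 2 : ℕ) : ℝ)) atTop
    (nhds mm) := by
  obtain ⟨K, hK, hb⟩ := var_bound
  set F : ℕ → ℝ → ℝ≥0∞ := fun N x =>
    ENNReal.ofReal ((SR ((N + 1) ^ 2) x / (((N + 1) ^ 2 : ℕ) : ℝ) - mm) ^ 2) with hF
  have hFm : ∀ N, Measurable (F N) := by
    intro N
    exact ((((SR_meas _).div_const _).sub_const _).pow_const 2).ennreal_ofReal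
  have hFb : ∀ N, ∫⁻ x, F N x ∂gm ≤ ENNReal.ofReal (1 / ((N : ℝ) + 1) ^ 2) * K := by
    intro N
    have e : ∀ x, F N x = ENNReal.ofReal (1 / ((N : ℝ) + 1) ^ 4) *
        ENNReal.ofReal ((SR ((N + 1) ^ 2) x - ((N + 1) ^ 2 : ℕ) * mm) ^ 2) := by
      intro x
      rw [hF, ← ENNReal.ofReal_mul (by positivity)]
      congr 1
      push_cast
      field_simp
    simp_rw [e]
    rw [lintegral_const_mul _ ((((SR_meas _).sub_const _).pow_const 2).ennreal_ofReal)]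
    refine (mul_le_mul_right (hb ((N + 1) ^ 2)) _).trans (le_of_eq ?_)
    rw [← mul_assoc]
    congr 1
    rw [← ENNReal.ofReal_natCast, ← ENNReal.ofReal_mul (by positivity)]
    congr 1
    push_cast
    field_simp
  have hsum : Summable (fun N : ℕ => 1 / ((N : ℝ) + 1) ^ 2) := by
    have := (summable_nat_add_iff (f := fun n : ℕ => 1 / (n : ℝ) ^ 2) 1).mpr hasSum_zeta_two.summable
    simpa using this
  have hfin : ∫⁻ x, ∑' N, F N x ∂gm ≠ ⊤ := by
    rw [lintegral_tsum fun N => (hFm N).aemeasurable]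
    refine ne_top_of_le_ne_top ?_ (ENNReal.tsum_le_tsum hFb)
    rw [ENNReal.tsum_mul_right, ← ENNReal.ofReal_tsum_of_nonneg (fun N => by positivity) hsum]
    exact ENNReal.mul_ne_top (by simp) hK.ne
  filter_upwards [ae_lt_top (Measurable.tsum hFm) hfin] with x hx
  have h1 := ENNReal.tendsto_atTop_zero_of_tsum_ne_top hx.ne
  have h2 := (ENNReal.tendsto_toReal ENNReal.zero_ne_top).comp h1
  have h3 := (Real.continuous_sqrt.tendsto _).comp h2
  rw [tendsto_iff_norm_sub_tendsto_zero]
  simp only [ENNReal.toReal_zero, Real.sqrt_zero] at h3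
  refine h3.congr fun N => ?_
  simp only [Function.comp_apply, hF]
  rw [ENNReal.toReal_ofReal (by positivity), Real.sqrt_sq_eq_abs, Real.norm_eq_abs]

lemma full_conv : ∀ᵐ x ∂gm, Tendsto (fun n : ℕ => SR n x / (n : ℝ)) atTop (nhds mm) := by
  filter_upwards [sub_conv, gm_mem] with x hx hx1
  apply tendsto_div_of_monotone_of_exists_subseq_tendsto_div (fun n => SR n x)
  · apply monotone_nat_of_le_succ
    intro n
    unfold SR
    rw [Finset.sum_range_succ]
    linarith [neglog_nonneg hx1 n]
  · intro a ha
    refine ⟨fun n => (n + 1) ^ 2, ?_, ?_, hx⟩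
    · obtain ⟨n0, hn0⟩ := exists_nat_ge (3 / (a - 1))
      filter_upwards [eventually_ge_atTop n0] with n hn
      have h1 : (n0 : ℝ) ≤ n := by exact_mod_cast hn
      have h2 : 0 < a - 1 := by linarith
      rw [div_le_iff₀ h2] at hn0
      have h4 : (0 : ℝ) ≤ n := by positivity
      have h3 : 3 ≤ ((n : ℝ) + 1) * (a - 1) := by nlinarith
      push_cast
      nlinarith [mul_le_mul_of_nonneg_right h3 (by positivity : (0 : ℝ) ≤ n + 1)]
    · refine tendsto_atTop_mono (fun n => ?_) tendsto_id
      simp only [id]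
      nlinarith

/-- Lochs-type theorem from continued fractions to Farey: for Lebesgue-a.e. `x`,
`log L_n(x, 𝒞ℱ, ℱ)/n → π²/(12 log 2)`. -/
theorem lochsCFtoF_ae :
    ∀ᵐ x ∂(volume.restrict (Set.Icc (0 : ℝ) 1)),
      Tendsto (fun n : ℕ => Real.log (lochsCFtoF x n : ℝ) / (n : ℝ)) atTop
        (nhds (Real.pi ^ 2 / (12 * Real.log 2))) := by
  rw [← Measure.restrict_congr_set (Ioo_ae_eq_Icc (a := (0 : ℝ)) (b := 1))]
  have hirr : ∀ᵐ x ∂(volume.restrict (Set.Ioo (0 : ℝ) 1)), Irrational x := by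
    apply ae_restrict_of_ae
    rw [ae_iff]
    have : {a : ℝ | ¬Irrational a} = Set.range ((↑) : ℚ → ℝ) := by
      ext a; simp [Irrational]
    rw [this]
    exact (Set.countable_range _).measure_zero _
  filter_upwards [gm_ae.mp full_conv, hirr, ae_restrict_mem measurableSet_Ioo] with x hx hxi hxm
  have h0 : Tendsto (fun n : ℕ => Real.log 3 / (n : ℝ)) atTop (nhds 0) :=
    tendsto_const_nhds.div_atTop tendsto_natCast_atTop_atTop
  have h1 : Tendsto (fun n : ℕ => Real.log (lochsCFtoF x n : ℝ) / (n : ℝ) - SR n x / (n : ℝ)) atTop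
      (nhds 0) := by
    refine squeeze_zero_norm' ?_ h0
    filter_upwards [eventually_ge_atTop 2] with n hn
    rw [← sub_div, norm_div, Real.norm_eq_abs, Real.norm_natCast]
    exact div_le_div_of_nonneg_right (lochs_log hxi hxm n hn) (by positivity)
  have h2 := h1.add hx
  rw [zero_add] at h2
  exact h2.congr fun n => by ring
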